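/- arXiv:2602.15170 — 4 statements merged into one kernel-verified Lean document; each statement's English description precedes it below -/
import Mathlib

section
/- Let K be a field and let X be a second countable compact Hausdorff totally disconnected topological space. Then every ideal I of the commutative ring LocallyConstant X K is countably generated: there exists a countable set S ⊆ LocallyConstant X K with Ideal.span S = I. -/
/-- For a field `K` and a second countable compact Hausdorff totally disconnected
space `X`, every ideal of `LocallyConstant X K` is countably generated. -/
theorem locallyConstant_ideal_countably_generated
    (K : Type*) [Field K] (X : Type*) [TopologicalSpace X] [CompactSpace X]
    [T2Space X] [TotallyDisconnectedSpace X] [SecondCountableTopology X]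
    (I : Ideal (LocallyConstant X K)) :
    ∃ S : Set (LocallyConstant X K), S.Countable ∧ Ideal.span S = I := by
  classical
  have hc : Countable (TopologicalSpace.Clopens X) :=
    TopologicalSpace.Clopens.countable_iff_secondCountable.mpr inferInstance
  let e : TopologicalSpace.Clopens X → LocallyConstant X K :=
    fun U => LocallyConstant.charFn K U.isClopen
  refine ⟨Set.range e ∩ I, (Set.countable_range e).mono Set.inter_subset_left, ?_⟩
  apply le_antisymm
  · exact Ideal.span_le.mpr Set.inter_subset_right
  · intro f hf
    let U : TopologicalSpace.Clopens X :=
      ⟨f ⁻¹' {0}ᶜ, (IsLocallyConstant.isClopen_fiber f.isLocallyConstant 0).compl⟩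
    have hU : ∀ x, e U x = if f x = 0 then 0 else 1 := by
      intro x
      change Set.indicator (f ⁻¹' {0}ᶜ) 1 x = _
      by_cases h : f x = 0 <;> simp [Set.indicator, h]
    have h1 : e U = f.map (fun a => a⁻¹) * f := by
      ext x
      rw [hU]
      by_cases h : f x = 0 <;> simp [h]
    have h2 : f = f * e U := by
      ext x
      rw [LocallyConstant.mul_apply, hU]
      by_cases h : f x = 0 <;> simp [h]
    rw [h2]
    refine Ideal.mul_mem_left _ _ (Ideal.subset_span ⟨⟨U, rfl⟩, ?_⟩)
    rw [h1]
    exact Ideal.mul_mem_left _ _ hf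
end

section
/- Let K be a field and let X be a second countable compact Hausdorff totally disconnected topological space, and set R := LocallyConstant X K. Then every ideal I of R is projective as an R-module (Module.Projective R I); that is, R is a hereditary ring. -/
/-- If there is a sequence in `I` such that each element of `I` is fixed by one of its
terms, then `I` is projective. -/
theorem projective_of_seq {R : Type*} [CommRing R] (I : Ideal R) (e : ℕ → R)
    (he : ∀ n, e n ∈ I) (h : ∀ a ∈ I, ∃ n, a * e n = a) : Module.Projective R I := by
  classical
  let p : ℕ → R := fun n => ∏ i ∈ Finset.range n, (1 - e i)
  have hp : ∀ a ∈ I, ∃ N, ∀ n, N ≤ n → a * p n = 0 := by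
    intro a ha
    obtain ⟨k, hk⟩ := h a ha
    refine ⟨k + 1, fun n hn => ?_⟩
    have hd : (1 - e k) ∣ p n := Finset.dvd_prod_of_mem _ (Finset.mem_range.2 (by omega))
    obtain ⟨c, hc⟩ := hd
    rw [hc, ← mul_assoc, mul_sub, hk]
    simp
  have hfin : ∀ a : I, (Function.support fun n => (a : R) * p n).Finite := by
    intro a
    obtain ⟨N, hN⟩ := hp a a.2
    refine (Set.finite_lt_nat N).subset fun n hn => ?_
    by_contra hc
    exact hn (hN n (not_lt.1 hc))
  let s : I →ₗ[R] (ℕ →₀ R) :=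
    { toFun := fun a => Finsupp.ofSupportFinite _ (hfin a)
      map_add' := by
        intro a b
        ext n
        simp [Finsupp.ofSupportFinite_coe, add_mul]
      map_smul' := by
        intro c a
        ext n
        simp [Finsupp.ofSupportFinite_coe, mul_assoc] }
  let t : (ℕ →₀ R) →ₗ[R] I := Finsupp.linearCombination R fun n => (⟨e n, he n⟩ : I)
  refine Module.Projective.of_split s t ?_
  ext a
  obtain ⟨N, hN⟩ := hp a a.2
  have hs : ∀ n, s a n = (a : R) * p n := fun n => rfl
  have hsub : (s a).support ⊆ Finset.range N := by
    intro n hn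
    rw [Finsupp.mem_support_iff, hs] at hn
    rw [Finset.mem_range]
    by_contra hc
    exact hn (hN n (not_lt.1 hc))
  have h1 : t (s a) = ∑ n ∈ Finset.range N, (s a n) • (⟨e n, he n⟩ : I) := by
    change Finsupp.linearCombination R _ (s a) = _
    rw [Finsupp.linearCombination_apply]
    exact Finsupp.sum_of_support_subset _ hsub _ (by simp)
  have h2 : ∀ M, ∑ n ∈ Finset.range M, (a : R) * p n * e n = a - a * p M := by
    intro M
    induction M with
    | zero => simp [p]
    | succ M ih =>
      rw [Finset.sum_range_succ, ih]
      have : p (M + 1) = p M * (1 - e M) := Finset.prod_range_succ _ _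
      rw [this]
      ring
  have h3 : ((t (s a) : I) : R) = a := by
    rw [h1]
    simp only [hs, AddSubmonoidClass.coe_finsetSum, Submodule.coe_smul, smul_eq_mul]
    rw [h2, hN N le_rfl, sub_zero]
  exact h3

/-- For a field `K` and a second countable compact Hausdorff totally disconnected
space `X`, the ring `LocallyConstant X K` is hereditary: every ideal is projective
as a module. -/
theorem locallyConstant_hereditary
    (K : Type*) [Field K] (X : Type*) [TopologicalSpace X] [CompactSpace X]
    [T2Space X] [TotallyDisconnectedSpace X] [SecondCountableTopology X]
    (I : Ideal (LocallyConstant X K)) :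
    Module.Projective (LocallyConstant X K) I := by
  classical
  have : Countable (TopologicalSpace.Clopens X) :=
    TopologicalSpace.Clopens.countable_iff_secondCountable.2 inferInstance
  obtain ⟨g, hg⟩ := exists_surjective_nat (TopologicalSpace.Clopens X)
  refine projective_of_seq I
    (fun n => if LocallyConstant.charFn K (g n).isClopen ∈ I then
      LocallyConstant.charFn K (g n).isClopen else 0) ?_ ?_
  · intro n
    split_ifs with h
    · exact h
    · exact I.zero_mem
  · intro a ha
    obtain ⟨n, hn⟩ := hg ⟨a ⁻¹' {0}ᶜ, a.isLocallyConstant.isClopen_fiber 0 |>.compl⟩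
    have key : LocallyConstant.charFn K (g n).isClopen = a.map (fun x => x⁻¹) * a := by
      ext x
      have hx : x ∈ (g n : Set X) ↔ a x ≠ 0 := by
        rw [hn]
        rfl
      rw [LocallyConstant.coe_charFn]
      by_cases h0 : a x = 0
      · have : x ∉ (g n : Set X) := fun hc => hx.1 hc h0
        simp [this, h0]
      · have : x ∈ (g n : Set X) := hx.2 h0
        simp [this, h0]
    refine ⟨n, ?_⟩
    have hm : LocallyConstant.charFn K (g n).isClopen ∈ I := key ▸ I.mul_mem_left _ ha
    simp only [if_pos hm]
    rw [key]
    ext x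
    by_cases h0 : a x = 0 <;> simp [h0]
end

section
/- Let θ be a semi-saturated partial action of the free group FreeGroup A on a set X, and write X_g := (θ g).target. For all u, v ∈ FreeGroup A one has (θ u) '' ((θ u).source ∩ (θ v).target) ⊆ (θ (u*v)).target; moreover, if |u * v| = |u| + |v|, then equality holds: (θ u) '' ((θ u).source ∩ (θ v).target) = (θ (u*v)).target. -/
/-- A partial action of the free group `FreeGroup A` on a set `X`, given as a family
of partial bijections of `X`. -/
structure IsPartialAction {A X : Type*} (θ : FreeGroup A → PartialEquiv X X) : Prop where
  one : θ 1 = PartialEquiv.refl X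
  inv : ∀ g : FreeGroup A, θ g⁻¹ = (θ g).symm
  compat : ∀ (g h : FreeGroup A) (x : X), x ∈ (θ h).source → θ h x ∈ (θ g).source →
    x ∈ (θ (g * h)).source ∧ θ (g * h) x = θ g (θ h x)

/-- A partial action of a free group is semi-saturated if `θ (u * v)` is the composite
of `θ v` followed by `θ u` whenever there is no cancellation in forming `u * v`. -/
def IsSemiSaturated {A X : Type*} [DecidableEq A] (θ : FreeGroup A → PartialEquiv X X) : Prop :=
  ∀ u v : FreeGroup A,
    (FreeGroup.toWord (u * v)).length
      = (FreeGroup.toWord u).length + (FreeGroup.toWord v).length →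
    θ (u * v) = (θ v).trans (θ u)

/-- For a semi-saturated partial action of a free group,
`θ u (X_{u⁻¹} ∩ X_v) ⊆ X_{u v}`, with equality when there is no cancellation
in forming `u * v`. -/
theorem image_source_inter_target
    {A X : Type*} [DecidableEq A] (θ : FreeGroup A → PartialEquiv X X)
    (hpa : IsPartialAction θ) (hss : IsSemiSaturated θ)
    (u v : FreeGroup A) :
    (θ u) '' ((θ u).source ∩ (θ v).target) ⊆ (θ (u * v)).target ∧
      ((FreeGroup.toWord (u * v)).length
          = (FreeGroup.toWord u).length + (FreeGroup.toWord v).length →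
        (θ u) '' ((θ u).source ∩ (θ v).target) = (θ (u * v)).target) := by
  have hsub : (θ u) '' ((θ u).source ∩ (θ v).target) ⊆ (θ (u * v)).target := by
    rintro _ ⟨y, ⟨hu, hv⟩, rfl⟩
    have h1 : (θ v).symm y ∈ (θ v).source := (θ v).map_target hv
    have h2 : θ v ((θ v).symm y) = y := (θ v).right_inv hv
    obtain ⟨h3, h4⟩ := hpa.compat u v ((θ v).symm y) h1 (by rw [h2]; exact hu)
    rw [h2] at h4
    rw [← h4]
    exact (θ (u * v)).map_source h3
  refine ⟨hsub, fun hlen => Set.Subset.antisymm hsub ?_⟩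
  intro z hz
  rw [hss u v hlen, PartialEquiv.trans_target] at hz
  exact ⟨(θ u).symm z, ⟨(θ u).map_target hz.1, hz.2⟩, (θ u).right_inv hz.1⟩
end

section
/- Let X be a compact Hausdorff totally disconnected topological space, let U ⊆ X be clopen, and let T : X → X be a function that is a local homeomorphism on U (IsLocalHomeomorphOn T U). Then there exist finitely many pairwise disjoint clopen subsets U_1, …, U_n of X whose union is U such that for each i, T is injective on U_i and the image T '' U_i is clopen in X. -/
/-- If `X` is compact Hausdorff and totally disconnected, `U ⊆ X` is clopen, and
`T : X → X` is a local homeomorphism on `U`, then `U` can be partitioned into finitely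
many pairwise disjoint clopen sets on each of which `T` is injective with clopen image. -/
theorem exists_clopen_partition_of_isLocalHomeomorphOn
    (X : Type*) [TopologicalSpace X] [CompactSpace X] [T2Space X]
    [TotallyDisconnectedSpace X]
    (U : Set X) (hU : IsClopen U) (T : X → X) (hT : IsLocalHomeomorphOn T U) :
    ∃ (n : ℕ) (V : Fin n → Set X),
      (∀ i, IsClopen (V i)) ∧
      (Pairwise fun i j => Disjoint (V i) (V j)) ∧
      (⋃ i, V i) = U ∧
      (∀ i, Set.InjOn T (V i) ∧ IsClopen (T '' V i)) := by
  classical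
  have key : ∀ x ∈ U, ∃ W : Set X, IsClopen W ∧ x ∈ W ∧ W ⊆ U ∧
      ∀ V : Set X, IsClopen V → V ⊆ W → Set.InjOn T V ∧ IsClopen (T '' V) := by
    intro x hx
    obtain ⟨e, hxe, rfl⟩ := hT x hx
    obtain ⟨W, hW, hxW, hWs⟩ := compact_exists_isClopen_in_isOpen
      (e.open_source.inter hU.isOpen) ⟨hxe, hx⟩
    refine ⟨W, hW, hxW, fun y hy => (hWs hy).2, fun V hV hVW => ?_⟩
    have hVs : V ⊆ e.source := fun y hy => (hWs (hVW hy)).1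
    refine ⟨e.injOn.mono hVs, ?_, e.isOpen_image_of_subset_source hV.isOpen hVs⟩
    exact (hV.isClosed.isCompact.image_of_continuousOn (e.continuousOn.mono hVs)).isClosed
  choose! W hW hxW hWU hgood using key
  obtain ⟨t, htU, htc⟩ := hU.isClosed.isCompact.elim_nhds_subcover W
    (fun x hx => (hW x hx).isOpen.mem_nhds (hxW x hx))
  let g : Fin t.card → X := fun i => (t.equivFin.symm i : X)
  have hg : ∀ i, g i ∈ U := fun i => htU _ (t.equivFin.symm i).2
  let V : Fin t.card → Set X := fun i => W (g i) \ ⋃ j ∈ Set.Iio i, W (g j)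
  have hV : ∀ i, IsClopen (V i) := fun i =>
    (hW _ (hg i)).diff ((Set.toFinite _).isClopen_biUnion fun j _ => hW _ (hg j))
  have hlt : ∀ i j, i < j → Disjoint (V i) (V j) := by
    intro i j hij
    rw [Set.disjoint_left]
    intro x hx hx'
    exact hx'.2 (Set.mem_biUnion (show i ∈ Set.Iio j from hij) hx.1)
  refine ⟨t.card, V, hV, ?_, ?_, fun i => hgood _ (hg i) _ (hV i) Set.diff_subset⟩
  · intro i j hij
    rcases lt_or_gt_of_ne hij with h | h
    · exact hlt i j h
    · exact (hlt j i h).symm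
  · apply Set.Subset.antisymm
    · exact Set.iUnion_subset fun i => Set.diff_subset.trans (hWU _ (hg i))
    · intro x hx
      obtain ⟨y, hy, hxy⟩ := Set.mem_iUnion₂.1 (htc hx)
      have hex : ∃ i, x ∈ W (g i) := ⟨t.equivFin ⟨y, hy⟩, by simpa [g] using hxy⟩
      obtain ⟨i, hi, hmin⟩ := WellFounded.has_min (wellFounded_lt (α := Fin t.card))
        {i | x ∈ W (g i)} hex
      refine Set.mem_iUnion.2 ⟨i, hi, fun h => ?_⟩
      obtain ⟨j, hj, hxj⟩ := Set.mem_iUnion₂.1 h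
      exact hmin j hxj hj
end
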